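/- Let b, c be coprime positive integers, let p > 1 be an integer, let l be an integer with 0 ≤ l ≤ p−2, and let χ₁, χ₂ be non-principal primitive Dirichlet characters of the same modulus k satisfying (−1)^{p+1}·χ₁(−1)·χ₂(−1) = −1. Then C(p,l+1)·(−b/c)^l·b · ∫_0^k x·B̄_{l+1,χ̄₁}(cx)·B̄_{p−(l+1),χ₂}(bx) dx = χ₁(−1)·(k/2)·(k/c)^{p−1} · Σ_{h=1}^{k−1} Σ_{j=1}^{k−1} χ₁(h)·χ̄₂(j)·B̄_p( (c·j + b·h)/k ). -/

import Mathlib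

open Finset

/-- The `n`-th Bernoulli polynomial evaluated at a real number. -/
noncomputable def BPoly (n : ℕ) (x : ℝ) : ℝ :=
  Polynomial.eval x ((Polynomial.bernoulli n).map (algebraMap ℚ ℝ))

open scoped Classical in
/-- The `n`-th Bernoulli function `B̄ₙ`. -/
noncomputable def BFun (n : ℕ) (x : ℝ) : ℝ :=
  if n = 1 then (if ∃ m : ℤ, x = (m : ℝ) then 0 else x - ⌊x⌋ - 1/2)
  else BPoly n (Int.fract x)

/-- The generalized Bernoulli function `B̄_{m,χ}` attached to a Dirichlet character. -/
noncomputable def BFunChar {k : ℕ} (χ : DirichletCharacter ℂ k) (m : ℕ) (x : ℝ) : ℂ :=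
  (k : ℂ) ^ ((m : ℤ) - 1) *
    ∑ n ∈ Finset.Icc 1 (k - 1), (starRingEnd ℂ) (χ (n : ZMod k)) * ((BFun m (((n : ℝ) + x) / k)) : ℂ)

/-- The generalized Bernoulli number `B_{m,χ} = B̄_{m,χ}(0)`. -/
noncomputable def BNumChar {k : ℕ} (χ : DirichletCharacter ℂ k) (m : ℕ) : ℂ := BFunChar χ m 0

/-- The complex conjugate of a Dirichlet character. -/
noncomputable def conjChar {k : ℕ} (χ : DirichletCharacter ℂ k) : DirichletCharacter ℂ k :=
  χ.ringHomComp (starRingEnd ℂ)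

/-- The character Dedekind sum `s_p(b,c : χ₁, χ₂)` for characters of the same modulus. -/
noncomputable def sChar {k : ℕ} (p b c : ℕ) (χ₁ χ₂ : DirichletCharacter ℂ k) : ℂ :=
  ∑ n ∈ Finset.range (c * k),
    χ₁ (n : ZMod k) * BFunChar χ₂ p (((b : ℝ) * n) / c) * ((BFun 1 ((n : ℝ) / (c * k))) : ℂ)

theorem hasSum_unique_of_eq {F G : ℤ → ℂ} {a b : ℂ} (hF : HasSum F a) (hG : HasSum G b)
    (h : ∀ t, F t = G t) : a = b := by
  obtain rfl : F = G := funext h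
  exact hF.unique hG

open MeasureTheory AddCircle in
theorem parsevalAux (f g : UnitAddCircle → ℂ) (hf : MemLp f 2 haarAddCircle)
    (hg : MemLp g 2 haarAddCircle) :
    HasSum (fun n : ℤ => (starRingEnd ℂ) (fourierCoeff f n) * fourierCoeff g n)
      (∫ t, (starRingEnd ℂ) (f t) * g t ∂haarAddCircle) := by
  have h := (fourierBasis (T := (1 : ℝ))).hasSum_inner_mul_inner hf.toLp hg.toLp
  have key : ∀ (u : UnitAddCircle → ℂ) (hu : MemLp u 2 haarAddCircle) (n : ℤ),
      inner ℂ (fourierBasis n) hu.toLp = fourierCoeff u n := by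
    intro u hu n
    rw [← HilbertBasis.repr_apply_apply, fourierBasis_repr]
    exact congrFun (fourierCoeff_congr_ae hu.coeFn_toLp) n
  have e1 : (fun n : ℤ => (starRingEnd ℂ) (fourierCoeff f n) * fourierCoeff g n) = fun i =>
      inner ℂ (MemLp.toLp f hf) (fourierBasis i) * inner ℂ (fourierBasis i) (MemLp.toLp g hg) := by
    funext n
    rw [key g hg, ← inner_conj_symm, key f hf]
  have e2 : ∫ t, (starRingEnd ℂ) (f t) * g t ∂haarAddCircle =
      inner ℂ (MemLp.toLp f hf) (MemLp.toLp g hg) := by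
    rw [L2.inner_def]
    apply integral_congr_ae
    filter_upwards [hf.coeFn_toLp, hg.coeFn_toLp] with x hx hy
    rw [hx, hy]
    simp [mul_comm]
  rw [e1, e2]
  exact h

open MeasureTheory AddCircle in
theorem fourierCoeff_scale (f : UnitAddCircle → ℂ) (hf : AEStronglyMeasurable f haarAddCircle)
    (c : ℕ) (hc : c ≠ 0) (a : UnitAddCircle) (t : ℤ) :
    fourierCoeff (fun y => f ((c : ℤ) • y + a)) (c * t) = fourier t a * fourierCoeff f t := by
  have mp : MeasurePreserving (fun y : UnitAddCircle => (c : ℤ) • y + a)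
      haarAddCircle haarAddCircle :=
    (measurePreserving_add_right haarAddCircle a).comp
      (Measure.measurePreserving_zsmul haarAddCircle (by exact_mod_cast hc))
  unfold fourierCoeff
  rw [← integral_const_mul]
  set G : UnitAddCircle → ℂ := fun z => fourier t a * (fourier (-t) z • f z) with hG
  have hGm : AEStronglyMeasurable G haarAddCircle := by
    refine AEStronglyMeasurable.const_mul ?_ _
    exact ((fourier (-t)).continuous.aestronglyMeasurable).smul hf
  have := integral_map (μ := haarAddCircle) mp.aemeasurable (f := G) (by rw [mp.map_eq]; exact hGm)
  rw [mp.map_eq] at this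
  rw [this]
  congr 1
  ext y
  simp only [hG, smul_eq_mul, ← mul_assoc]
  congr 1
  simp only [fourier_apply]
  rw [← Circle.coe_mul, ← toCircle_add]
  congr 2
  rw [smul_add, ← mul_smul]
  rw [mul_comm (-t), mul_neg]
  simp only [neg_smul]
  abel

open MeasureTheory AddCircle in
theorem fourierCoeff_scale_zero (f : UnitAddCircle → ℂ)
    (c : ℕ) (hc : c ≠ 0) (a : UnitAddCircle) (r : ℤ) (hr : ¬ (c : ℤ) ∣ r) :
    fourierCoeff (fun y => f ((c : ℤ) • y + a)) r = 0 := by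
  unfold fourierCoeff
  set u : UnitAddCircle := ((1 / c : ℝ) : UnitAddCircle) with hu
  have hc' : (c : ℝ) ≠ 0 := by exact_mod_cast hc
  have hcu : (c : ℤ) • u = 0 := by
    rw [hu, ← AddCircle.coe_zsmul]
    rw [AddCircle.coe_eq_zero_iff]
    refine ⟨1, ?_⟩
    simp
    field_simp
  have hw : fourier (-r) u ≠ 1 := by
    rw [fourier_apply]
    intro h
    have h1 : toCircle ((-r) • u) = 1 := by
      ext; simpa using h
    rw [← toCircle_zero] at h1
    have h2 := injective_toCircle (T := 1) one_ne_zero h1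
    rw [hu, ← AddCircle.coe_zsmul, AddCircle.coe_eq_zero_iff] at h2
    obtain ⟨n, hn⟩ := h2
    apply hr
    refine ⟨-n, ?_⟩
    simp at hn
    field_simp at hn
    have : (n * c : ℤ) = -r := by exact_mod_cast hn
    linarith
  have h := integral_add_right_eq_self (μ := (haarAddCircle : Measure UnitAddCircle))
    (fun y => fourier (-r) y • f ((c : ℤ) • y + a)) u
  have h3 : ∀ y : UnitAddCircle, fourier (-r) (y + u) • f ((c : ℤ) • (y + u) + a)
      = fourier (-r) u * (fourier (-r) y • f ((c : ℤ) • y + a)) := by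
    intro y
    rw [smul_add, hcu, add_zero, smul_eq_mul, smul_eq_mul, ← mul_assoc]
    congr 1
    simp only [fourier_apply, smul_add, toCircle_add, Circle.coe_mul]
    ring
  simp_rw [h3] at h
  rw [integral_const_mul] at h
  have : (fourier (-r) u - 1) *
    ∫ y, fourier (-r) y • f ((c : ℤ) • y + a) ∂(haarAddCircle : Measure UnitAddCircle) = 0 := by
    rw [sub_mul, h]; ring
  rcases mul_eq_zero.mp this with h4 | h4
  · exact absurd (sub_eq_zero.mp h4) hw
  · exact h4

noncomputable def PB (m : ℕ) : UnitAddCircle → ℂ := (fun x : ℝ => (x : ℂ)) ∘ periodizedBernoulli m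

theorem PB_coe (m : ℕ) (x : ℝ) : PB m (x : UnitAddCircle) = (bernoulliFun m (Int.fract x) : ℂ) := by
  have : (x : UnitAddCircle) = ((Int.fract x : ℝ) : UnitAddCircle) := by
    rw [AddCircle.coe_fract]
  rw [this]
  simp only [PB, Function.comp_apply, periodizedBernoulli]
  rw [AddCircle.liftIco_coe_apply]
  rw [zero_add]
  exact ⟨Int.fract_nonneg x, Int.fract_lt_one x⟩

theorem PB_measurable (m : ℕ) : Measurable (PB m) := by
  have h1 : Measurable (periodizedBernoulli m) := by
    have : periodizedBernoulli m = (fun x : Set.Ico (0:ℝ) (0 + 1) => bernoulliFun m x) ∘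
      AddCircle.measurableEquivIco 1 0 := rfl
    rw [this]
    refine Measurable.comp ?_ (MeasurableEquiv.measurable _)
    exact ((continuous_bernoulliFun m).measurable).comp measurable_subtype_coe
  exact Complex.measurable_ofReal.comp h1

theorem bernoulliFun_bdd (m : ℕ) : ∃ C : ℝ, ∀ x : ℝ, |bernoulliFun m (Int.fract x)| ≤ C := by
  obtain ⟨C, hC⟩ := isCompact_Icc.exists_bound_of_continuousOn (s := Set.Icc (0:ℝ) 1)
    (continuous_bernoulliFun m).continuousOn
  exact ⟨C, fun x => hC _ ⟨Int.fract_nonneg x, (Int.fract_lt_one x).le⟩⟩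

theorem PB_bdd (m : ℕ) : ∃ C : ℝ, ∀ x, ‖PB m x‖ ≤ C := by
  obtain ⟨C, hC⟩ := bernoulliFun_bdd m
  refine ⟨C, fun x => ?_⟩
  induction x using QuotientAddGroup.induction_on with
  | H x => 
    have := PB_coe m x
    rw [show ((QuotientAddGroup.mk x : UnitAddCircle)) = (x : UnitAddCircle) from rfl, this]
    simpa using hC x

open MeasureTheory AddCircle in
theorem PB_memLp (m c : ℕ) (a : UnitAddCircle) :
    MemLp (fun y : UnitAddCircle => PB m ((c : ℤ) • y + a)) 2 haarAddCircle := by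
  obtain ⟨C, hC⟩ := PB_bdd m
  refine MemLp.of_bound (C := C) ?_ (Filter.Eventually.of_forall fun x => hC _)
  refine Measurable.aestronglyMeasurable ?_
  refine (PB_measurable m).comp ?_
  exact (Continuous.measurable (by fun_prop))

open MeasureTheory AddCircle in
theorem PB_integral (m n b c : ℕ) (hm : m ≠ 0) (hn : n ≠ 0) (hb : 0 < b) (hc : 0 < c)
    (hbc : Nat.Coprime b c) (α β : ℝ) :
    ∫ y : UnitAddCircle, PB m ((c : ℤ) • y + (α : UnitAddCircle)) *
        PB n ((b : ℤ) • y + (β : UnitAddCircle)) ∂haarAddCircle =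
      (-1) ^ (m + 1) * (m.factorial * n.factorial / (m + n).factorial) / (b ^ m * c ^ n) *
        PB (m + n) ((c * β - b * α : ℝ) : UnitAddCircle) := by
  have hP := parsevalAux _ _ (PB_memLp m c α) (PB_memLp n b β)
  have hinj : Function.Injective (fun t : ℤ => (b * c : ℤ) * t) := by
    intro x y h
    have : (b * c : ℤ) ≠ 0 := by positivity
    exact mul_left_cancel₀ this h
  rw [← hinj.hasSum_iff] at hP
  swap
  · intro r hr
    by_cases h1 : (c : ℤ) ∣ r
    · by_cases h2 : (b : ℤ) ∣ r
      · exfalso; apply hr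
        have : (b * c : ℤ) ∣ r := IsCoprime.mul_dvd (Nat.isCoprime_iff_coprime.mpr hbc) h2 h1
        obtain ⟨t, ht⟩ := this
        exact ⟨t, ht.symm⟩
      · rw [fourierCoeff_scale_zero (PB n) b hb.ne' _ r h2, mul_zero]
    · rw [fourierCoeff_scale_zero (PB m) c hc.ne' _ r h1, map_zero, zero_mul]
  have hF := hasSum_one_div_pow_mul_fourier_mul_bernoulliFun (k := m + n) (by omega)
    (x := Int.fract (c * β - b * α)) ⟨Int.fract_nonneg _, (Int.fract_lt_one _).le⟩
  rw [← PB_coe] at hF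
  have hfr : ((Int.fract (c * β - b * α) : ℝ) : UnitAddCircle) = ((c * β - b * α : ℝ) : UnitAddCircle) :=
    AddCircle.coe_fract _
  rw [hfr] at hF
  have hconj : ∀ t, (starRingEnd ℂ) (PB m t) = PB m t := fun t => Complex.conj_ofReal _
  simp_rw [hconj] at hP
  have hF2 := hF.mul_left ((-1) ^ m * (m.factorial * n.factorial) / ((2 * Real.pi * Complex.I) ^ (m + n) * (b ^ m * c ^ n)))
  have huniq := hasSum_unique_of_eq hP hF2 (by
    intro t
    simp only [Function.comp_apply]
    have e1 := fourierCoeff_scale (PB m) (PB_measurable m).aestronglyMeasurable c hc.ne' α (b * t)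
    have e2 := fourierCoeff_scale (PB n) (PB_measurable n).aestronglyMeasurable b hb.ne' β (c * t)
    rw [show (c : ℤ) * (b * t) = b * c * t by ring] at e1
    rw [show (b : ℤ) * (c * t) = b * c * t by ring] at e2
    rw [e1, e2]
    have c1 := fourierCoeff_bernoulli_eq hm (b * t)
    have c2 := fourierCoeff_bernoulli_eq hn (c * t)
    change fourierCoeff (PB m) _ = _ at c1
    change fourierCoeff (PB n) _ = _ at c2
    rw [c1, c2]
    have e3 : fourier t ((c * β - b * α : ℝ) : UnitAddCircle) =
        (starRingEnd ℂ) (fourier (b * t) (α : UnitAddCircle)) * fourier (c * t) (β : UnitAddCircle) := by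
      rw [← fourier_neg]
      simp only [fourier_coe_apply, ← Complex.exp_add]
      congr 1
      push_cast
      ring
    rw [e3]
    simp only [map_mul, map_div₀, map_pow, map_neg, Complex.conj_I, Complex.conj_ofReal, map_natCast, map_ofNat, map_intCast]
    generalize (starRingEnd ℂ) (fourier (b * t) (α : UnitAddCircle)) = u
    generalize fourier (c * t) (β : UnitAddCircle) = v
    have e4 : (2 * (Real.pi : ℂ) * -Complex.I * ((b * t : ℤ) : ℂ)) ^ m =
        (-1) ^ m * (2 * (Real.pi : ℂ) * Complex.I) ^ m * b ^ m * t ^ m := by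
      rw [← mul_pow, ← mul_pow, ← mul_pow]; push_cast; ring
    have e5 : (2 * (Real.pi : ℂ) * Complex.I * ((c * t : ℤ) : ℂ)) ^ n =
        (2 * (Real.pi : ℂ) * Complex.I) ^ n * c ^ n * t ^ n := by
      rw [← mul_pow, ← mul_pow]; push_cast; ring
    rw [e4, e5]
    generalize (2 * (Real.pi : ℂ) * Complex.I) = w
    have e6 : (((-1 : ℂ)) ^ m)⁻¹ = (-1) ^ m := by rw [← inv_pow]; norm_num
    simp only [div_eq_mul_inv, mul_inv, pow_add, e6]
    ring)
  · rw [huniq]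
    have : (2 * Real.pi * Complex.I) ^ (m + n) ≠ 0 := pow_ne_zero _ Complex.two_pi_I_ne_zero
    field_simp
    ring

theorem BFun_of_ne (n : ℕ) (x : ℝ) (h : n ≠ 1 ∨ ∀ z : ℤ, x ≠ z) :
    BFun n x = bernoulliFun n (Int.fract x) := by
  unfold BFun
  by_cases hn : n = 1
  · subst hn
    have h' : ¬ ∃ m : ℤ, x = (m : ℝ) := by
      rintro ⟨z, hz⟩
      rcases h with h | h
      · exact h rfl
      · exact h z hz
    rw [if_pos rfl, if_neg h', bernoulliFun_one, ← Int.self_sub_floor]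
  · rw [if_neg hn]; rfl

theorem BFun_one_int (z : ℤ) : BFun 1 (z : ℝ) = 0 := by
  unfold BFun
  rw [if_pos rfl, if_pos ⟨z, rfl⟩]

theorem BFun_add_int (n : ℕ) (x : ℝ) (z : ℤ) : BFun n (x + z) = BFun n x := by
  by_cases h : n ≠ 1 ∨ ∀ w : ℤ, x ≠ w
  · rw [BFun_of_ne n x h, BFun_of_ne n (x + z), Int.fract_add_intCast]
    refine h.imp id fun h w hw => h (w - z) ?_
    push_cast; linarith
  · push Not at h
    obtain ⟨rfl, w, rfl⟩ := h
    rw [← Int.cast_add, BFun_one_int, BFun_one_int]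

theorem BFun_neg (n : ℕ) (x : ℝ) : BFun n (-x) = (-1) ^ n * BFun n x := by
  by_cases h : ∀ w : ℤ, x ≠ w
  · rw [BFun_of_ne n x (Or.inr h), BFun_of_ne n (-x), Int.fract_neg, bernoulliFun_eval_one_sub]
    · intro h0
      obtain ⟨w, hw⟩ := Int.fract_eq_zero_iff.mp h0
      exact h w hw.symm
    · refine Or.inr fun w hw => h (-w) ?_
      push_cast; linarith
  · push Not at h
    obtain ⟨w, rfl⟩ := h
    rw [← Int.cast_neg]
    by_cases hn : n = 1
    · subst hn
      rw [BFun_one_int, BFun_one_int, mul_zero]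
    · rw [BFun_of_ne _ _ (Or.inl hn), BFun_of_ne _ _ (Or.inl hn), Int.fract_intCast,
        Int.fract_intCast, ← bernoulliFun_eval_one_sub, sub_zero,
        bernoulliFun_endpoints_eq_of_ne_one hn]

theorem BFun_measurable (n : ℕ) : Measurable (BFun n) := by
  by_cases hn : n = 1
  · subst hn
    have : BFun 1 = (Set.range (fun z : ℤ => (z : ℝ))).indicator 0 + 
        (Set.range (fun z : ℤ => (z : ℝ)))ᶜ.indicator (fun x => bernoulliFun 1 (Int.fract x)) := by
      funext x
      by_cases hx : x ∈ Set.range (fun z : ℤ => (z : ℝ))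
      · obtain ⟨z, rfl⟩ := hx
        simp [BFun_one_int]
      · have h' : ∀ z : ℤ, x ≠ z := fun z hz => hx ⟨z, hz.symm⟩
        rw [BFun_of_ne _ _ (Or.inr h'), Pi.add_apply, Set.indicator_of_notMem hx,
          Set.indicator_of_mem (by exact hx), zero_add]
    rw [this]
    have hs : MeasurableSet (Set.range (fun z : ℤ => (z : ℝ))) :=
      (Set.countable_range _).measurableSet
    exact (measurable_zero.indicator hs).add
      ((((continuous_bernoulliFun 1).measurable).comp measurable_fract).indicator hs.compl)
  · have : BFun n = bernoulliFun n ∘ Int.fract := by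
      funext x
      exact BFun_of_ne n x (Or.inl hn)
    rw [this]
    exact ((continuous_bernoulliFun n).measurable).comp measurable_fract

theorem BFun_bdd (n : ℕ) : ∃ C : ℝ, ∀ x, |BFun n x| ≤ C := by
  obtain ⟨C, hC⟩ := bernoulliFun_bdd n
  refine ⟨C, fun x => ?_⟩
  by_cases h : n ≠ 1 ∨ ∀ w : ℤ, x ≠ w
  · rw [BFun_of_ne n x h]; exact hC x
  · push Not at h
    obtain ⟨rfl, w, rfl⟩ := h
    rw [BFun_one_int, abs_zero]
    exact (abs_nonneg _).trans (hC 0)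

theorem BFun_ae (n : ℕ) (c : ℕ) (hc : 0 < c) (a : ℝ) :
    ∀ᵐ y : ℝ, (BFun n (c * y + a) : ℂ) = PB n ((c : ℤ) • (y : UnitAddCircle) + (a : UnitAddCircle)) := by
  have hcount : (Set.range (fun z : ℤ => ((z : ℝ) - a) / c)).Countable := Set.countable_range _
  filter_upwards [hcount.ae_notMem MeasureTheory.volume] with y hy
  have h' : ∀ z : ℤ, c * y + a ≠ z := by
    intro z hz
    apply hy
    refine ⟨z, ?_⟩
    have : (c : ℝ) ≠ 0 := by positivity
    simp only
    field_simp
    linarith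
  rw [← AddCircle.coe_zsmul, ← AddCircle.coe_add, PB_coe, BFun_of_ne _ _ (Or.inr h')]
  simp

theorem BFun_integral (m n b c : ℕ) (hm : m ≠ 0) (hn : n ≠ 0) (hb : 0 < b) (hc : 0 < c)
    (hbc : Nat.Coprime b c) (α β : ℝ) :
    ∫ y in (0 : ℝ)..1, (BFun m (c * y + α) : ℂ) * (BFun n (b * y + β) : ℂ) =
      (-1) ^ (m + 1) * (m.factorial * n.factorial / (m + n).factorial) / (b ^ m * c ^ n) *
        (BFun (m + n) (c * β - b * α) : ℂ) := by
  have h := PB_integral m n b c hm hn hb hc hbc α β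
  rw [AddCircle.integral_haarAddCircle, inv_one, one_smul,
    ← UnitAddCircle.intervalIntegral_preimage 0, zero_add, PB_coe] at h
  rw [BFun_of_ne _ _ (Or.inl (by omega)), ← h]
  apply intervalIntegral.integral_congr_ae
  filter_upwards [BFun_ae m c hc α, BFun_ae n b hb β] with y h1 h2 _
  rw [h1, h2]

theorem BFun_integral_scaled (m n b c : ℕ) (hm : m ≠ 0) (hn : n ≠ 0) (hb : 0 < b) (hc : 0 < c)
    (hbc : Nat.Coprime b c) (k : ℕ) (hk : 0 < k) (h j : ℝ) :
    ∫ x in (0 : ℝ)..k, (BFun m ((h + c * x) / k) : ℂ) * (BFun n ((j + b * x) / k) : ℂ) =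
      k * ((-1) ^ (m + 1) * (m.factorial * n.factorial / (m + n).factorial) / (b ^ m * c ^ n) *
        (BFun (m + n) ((c * j - b * h) / k) : ℂ)) := by
  have hk' : (k : ℝ) ≠ 0 := by positivity
  have e := BFun_integral m n b c hm hn hb hc hbc (h / k) (j / k)
  have e2 := intervalIntegral.integral_comp_div (a := (0:ℝ)) (b := k) (c := k)
    (fun y : ℝ => (BFun m (c * y + h / k) : ℂ) * (BFun n (b * y + j / k) : ℂ)) hk'
  rw [zero_div, div_self hk', e] at e2
  rw [show (c * j - b * h) / k = c * (j / k) - b * (h / k) by ring]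
  rw [Complex.real_smul, Complex.ofReal_natCast] at e2
  rw [← e2]
  congr 1
  ext x
  congr 4 <;> ring

/-- Character-type sum of Bernoulli functions. -/
noncomputable def SB (k : ℕ) (ψ : ZMod k → ℂ) (m : ℕ) (x : ℝ) : ℂ :=
  ∑ n ∈ Finset.Icc 1 (k - 1), ψ (n : ZMod k) * ((BFun m (((n : ℝ) + x) / k)) : ℂ)

theorem sum_reflect {k : ℕ} (F : ℕ → ℂ) :
    ∑ n ∈ Finset.Icc 1 (k - 1), F n = ∑ n ∈ Finset.Icc 1 (k - 1), F (k - n) := by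
  refine Finset.sum_nbij' (fun n => k - n) (fun n => k - n) ?_ ?_ ?_ ?_ ?_
  · intro n hn; simp only [Finset.mem_Icc] at *; omega
  · intro n hn; simp only [Finset.mem_Icc] at *; omega
  · intro n hn; simp only [Finset.mem_Icc] at *; omega
  · intro n hn; simp only [Finset.mem_Icc] at *; omega
  · intro n hn
    simp only [Finset.mem_Icc] at hn
    rw [show k - (k - n) = n by omega]

theorem SB_reflect (k : ℕ) [NeZero k] (ψ : ZMod k → ℂ) (ε : ℂ) (hψ : ∀ z, ψ (-z) = ε * ψ z) (m c : ℕ)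
    (x : ℝ) : SB k ψ m (c * (k - x)) = ε * (-1) ^ m * SB k ψ m (c * x) := by
  have hk : (k : ℝ) ≠ 0 := by exact_mod_cast NeZero.ne k
  unfold SB
  rw [sum_reflect, Finset.mul_sum]
  refine Finset.sum_congr rfl fun n hn => ?_
  simp only [Finset.mem_Icc] at hn
  have h1 : ((k - n : ℕ) : ZMod k) = -(n : ZMod k) := by
    rw [Nat.cast_sub (by omega)]; simp
  have h2 : (((k - n : ℕ) : ℝ) + c * (k - x)) / k = -((n + c * x) / k) + ((1 + c : ℤ) : ℝ) := by
    rw [Nat.cast_sub (by omega)]; push_cast; field_simp; ring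
  rw [h1, h2, hψ, BFun_add_int, BFun_neg]
  push_cast
  ring

theorem SB_measurable (k : ℕ) (ψ : ZMod k → ℂ) (m c : ℕ) : Measurable fun x : ℝ => SB k ψ m (c * x) := by
  unfold SB
  refine Finset.measurable_sum _ fun n _ => Measurable.const_mul ?_ _
  refine Complex.measurable_ofReal.comp ((BFun_measurable m).comp ?_)
  exact Continuous.measurable (by fun_prop)

theorem SB_bdd (k : ℕ) (ψ : ZMod k → ℂ) (m : ℕ) : ∃ C : ℝ, ∀ x, ‖SB k ψ m x‖ ≤ C := by
  obtain ⟨C, hC⟩ := BFun_bdd m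
  refine ⟨∑ n ∈ Finset.Icc 1 (k - 1), ‖ψ (n : ZMod k)‖ * C, fun x => ?_⟩
  refine (norm_sum_le _ _).trans (Finset.sum_le_sum fun n _ => ?_)
  rw [norm_mul]
  refine mul_le_mul_of_nonneg_left ?_ (norm_nonneg _)
  simpa using hC _

open MeasureTheory in
theorem intervalIntegrable_of_bdd (f : ℝ → ℂ) (hf : Measurable f) (C : ℝ) (hC : ∀ x, ‖f x‖ ≤ C)
    (a b : ℝ) : IntervalIntegrable f volume a b := by
  refine (intervalIntegrable_const (c := C)).mono_fun' hf.aestronglyMeasurable ?_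
  exact Filter.Eventually.of_forall hC

theorem SB_mul_integrable (k : ℕ) (ψ φ : ZMod k → ℂ) (m n c b : ℕ) (a d : ℝ) :
    IntervalIntegrable (fun x : ℝ => SB k ψ m (c * x) * SB k φ n (b * x)) MeasureTheory.volume a d := by
  obtain ⟨C, hC⟩ := SB_bdd k ψ m
  obtain ⟨D, hD⟩ := SB_bdd k φ n
  refine intervalIntegrable_of_bdd _ ((SB_measurable k ψ m c).mul (SB_measurable k φ n b)) (C * D) ?_ _ _
  intro x
  rw [Pi.mul_apply, norm_mul]
  exact mul_le_mul (hC _) (hD _) (norm_nonneg _) ((norm_nonneg _).trans (hC 0))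

theorem SB_weighted (k : ℕ) [NeZero k] (ψ φ : ZMod k → ℂ) (ε δ : ℂ) (hψ : ∀ z, ψ (-z) = ε * ψ z)
    (hφ : ∀ z, φ (-z) = δ * φ z) (m n c b : ℕ) (hpar : ε * (-1) ^ m * (δ * (-1) ^ n) = 1) :
    ∫ x in (0 : ℝ)..k, (x : ℂ) * (SB k ψ m (c * x) * SB k φ n (b * x)) =
      k / 2 * ∫ x in (0 : ℝ)..k, SB k ψ m (c * x) * SB k φ n (b * x) := by
  have hi := SB_mul_integrable k ψ φ m n c b 0 k
  have hi2 : IntervalIntegrable (fun x : ℝ => (x : ℂ) * (SB k ψ m (c * x) * SB k φ n (b * x)))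
      MeasureTheory.volume 0 k :=
    hi.continuousOn_mul (by fun_prop)
  have h := intervalIntegral.integral_comp_sub_left (a := (0:ℝ)) (b := k)
    (fun x : ℝ => (x : ℂ) * (SB k ψ m (c * x) * SB k φ n (b * x))) k
  have h2 : ∀ x : ℝ, ((k - x : ℝ) : ℂ) * (SB k ψ m (c * (k - x)) * SB k φ n (b * (k - x))) =
      k * (SB k ψ m (c * x) * SB k φ n (b * x)) - x * (SB k ψ m (c * x) * SB k φ n (b * x)) := by
    intro x
    rw [SB_reflect k ψ ε hψ, SB_reflect k φ δ hφ]
    push_cast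
    linear_combination ((k : ℂ) - x) * (SB k ψ m (c * x) * SB k φ n (b * x)) * hpar
  simp_rw [h2] at h
  rw [intervalIntegral.integral_sub (hi.const_mul _) hi2, intervalIntegral.integral_const_mul,
    sub_self, sub_zero] at h
  linear_combination (-1 / 2 : ℂ) * h

theorem SB_integral (k : ℕ) [NeZero k] (ψ φ : ZMod k → ℂ) (ε : ℂ) (hψ : ∀ z, ψ (-z) = ε * ψ z)
    (m n b c : ℕ) (hm : m ≠ 0) (hn : n ≠ 0) (hb : 0 < b) (hc : 0 < c) (hbc : Nat.Coprime b c) :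
    ∫ x in (0 : ℝ)..k, SB k ψ m (c * x) * SB k φ n (b * x) =
      k * ((-1) ^ (m + 1) * (m.factorial * n.factorial / (m + n).factorial) / (b ^ m * c ^ n)) * ε *
        ∑ h ∈ Finset.Icc 1 (k - 1), ∑ j ∈ Finset.Icc 1 (k - 1),
          ψ (h : ZMod k) * φ (j : ZMod k) * ((BFun (m + n) (((c : ℝ) * j + (b : ℝ) * h) / k)) : ℂ) := by
  have hk : (k : ℝ) ≠ 0 := by exact_mod_cast NeZero.ne k
  have hint : ∀ i j : ℕ, IntervalIntegrable (fun x : ℝ => ψ (i : ZMod k) * φ (j : ZMod k) *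
      ((BFun m ((i + c * x) / k) : ℂ) * (BFun n ((j + b * x) / k) : ℂ))) MeasureTheory.volume 0 k := by
    intro i j
    obtain ⟨C, hC⟩ := BFun_bdd m
    obtain ⟨D, hD⟩ := BFun_bdd n
    refine IntervalIntegrable.const_mul ?_ _
    refine intervalIntegrable_of_bdd _ ?_ (C * D) ?_ _ _
    · refine Measurable.mul ?_ ?_
      · exact Complex.measurable_ofReal.comp
          ((BFun_measurable m).comp (Continuous.measurable (by fun_prop)))
      · exact Complex.measurable_ofReal.comp
          ((BFun_measurable n).comp (Continuous.measurable (by fun_prop)))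
    · intro x
      rw [norm_mul]
      refine mul_le_mul ?_ ?_ (norm_nonneg _) ((abs_nonneg _).trans (hC 0))
      · simpa using hC _
      · simpa using hD _
  have hexp : ∀ x : ℝ, SB k ψ m (c * x) * SB k φ n (b * x) =
      ∑ i ∈ Finset.Icc 1 (k - 1), ∑ j ∈ Finset.Icc 1 (k - 1), ψ (i : ZMod k) * φ (j : ZMod k) *
        ((BFun m ((i + c * x) / k) : ℂ) * (BFun n ((j + b * x) / k) : ℂ)) := by
    intro x
    unfold SB
    rw [Finset.sum_mul_sum]
    refine Finset.sum_congr rfl fun i _ => Finset.sum_congr rfl fun j _ => ?_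
    ring
  simp_rw [hexp]
  rw [intervalIntegral.integral_finsetSum]
  swap
  · intro i _
    have := IntervalIntegrable.sum (Finset.Icc 1 (k - 1)) (fun j _ => hint i j)
    have e : (fun x : ℝ => ∑ j ∈ Finset.Icc 1 (k - 1), ψ (i : ZMod k) * φ (j : ZMod k) *
        ((BFun m ((i + c * x) / k) : ℂ) * (BFun n ((j + b * x) / k) : ℂ))) =
        ∑ j ∈ Finset.Icc 1 (k - 1), fun x : ℝ => ψ (i : ZMod k) * φ (j : ZMod k) *
        ((BFun m ((i + c * x) / k) : ℂ) * (BFun n ((j + b * x) / k) : ℂ)) := by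
      funext x
      rw [Finset.sum_apply]
    rw [e]
    exact this
  rw [sum_reflect, Finset.mul_sum]
  refine Finset.sum_congr rfl fun i hi => ?_
  simp only [Finset.mem_Icc] at hi
  rw [intervalIntegral.integral_finsetSum (fun j _ => hint _ j), Finset.mul_sum]
  refine Finset.sum_congr rfl fun j _ => ?_
  rw [intervalIntegral.integral_const_mul,
    BFun_integral_scaled m n b c hm hn hb hc hbc k (Nat.pos_of_ne_zero (NeZero.ne k))]
  have h1 : ((k - i : ℕ) : ZMod k) = -(i : ZMod k) := by
    rw [Nat.cast_sub (by omega)]; simp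
  have h2 : ((c : ℝ) * j - b * ((k - i : ℕ) : ℝ)) / k = (c * j + b * i) / k + ((-b : ℤ) : ℝ) := by
    rw [Nat.cast_sub (by omega)]; push_cast; field_simp; ring
  rw [h1, h2, hψ, BFun_add_int]
  ring


/-- Evaluation of a weighted integral of a product of two generalized Bernoulli functions as a
double character sum, in the case `(−1)^{p+1} χ₁(−1) χ₂(−1) = −1`. -/
theorem integral_mul_BFunChar_eq_double_sum (b c : ℕ) (hb : 0 < b) (hc : 0 < c)
    (hbc : Nat.Coprime b c) (p : ℕ) (hp : 1 < p) (l : ℕ) (hl : l ≤ p - 2)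
    (k : ℕ) [NeZero k] (χ₁ χ₂ : DirichletCharacter ℂ k)
    (h₁ : χ₁ ≠ 1) (h₂ : χ₂ ≠ 1) (hprim₁ : χ₁.IsPrimitive) (hprim₂ : χ₂.IsPrimitive)
    (hpar : (-1 : ℂ) ^ (p + 1) * χ₁ (-1) * χ₂ (-1) = -1) :
    (Nat.choose p (l + 1) : ℂ) * (-(b : ℂ) / c) ^ l * (b : ℂ) *
        ∫ x in (0 : ℝ)..(k : ℝ), (x : ℂ) *
          BFunChar (conjChar χ₁) (l + 1) ((c : ℝ) * x) * BFunChar χ₂ (p - (l + 1)) ((b : ℝ) * x) =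
      χ₁ (-1) * ((k : ℂ) / 2) * ((k : ℂ) / c) ^ (p - 1) *
        ∑ h ∈ Finset.Icc 1 (k - 1), ∑ j ∈ Finset.Icc 1 (k - 1),
          χ₁ (h : ZMod k) * (starRingEnd ℂ) (χ₂ (j : ZMod k)) *
            ((BFun p (((c : ℝ) * j + (b : ℝ) * h) / k)) : ℂ) := by
  have hchi : ∀ (χ : DirichletCharacter ℂ k) (z : ZMod k), χ (-z) = χ (-1) * χ z := by
    intro χ z
    rw [← map_mul, neg_one_mul]
  have hψ : ∀ z : ZMod k, (fun z => χ₁ z) (-z) = χ₁ (-1) * (fun z => χ₁ z) z := hchi χ₁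
  have hφ : ∀ z : ZMod k, (fun z => (starRingEnd ℂ) (χ₂ z)) (-z) =
      (starRingEnd ℂ) (χ₂ (-1)) * (fun z => (starRingEnd ℂ) (χ₂ z)) z := by
    intro z
    simp only
    rw [hchi χ₂ z, map_mul]
  have hconj : (starRingEnd ℂ) (χ₂ (-1)) = χ₂ (-1) := by
    rcases χ₂.even_or_odd with h | h
    · rw [show χ₂ (-1) = _ from h]; simp
    · rw [show χ₂ (-1) = _ from h]; simp
  obtain ⟨n, rfl⟩ : ∃ n, p = l + 1 + (n + 1) := ⟨p - l - 2, by omega⟩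
  have hsub : l + 1 + (n + 1) - (l + 1) = n + 1 := by omega
  have hpow : l + 1 + (n + 1) - 1 = l + n + 1 := by omega
  rw [hsub, hpow]
  have hk0 : (k : ℂ) ≠ 0 := by exact_mod_cast NeZero.ne k
  have hb0 : (b : ℂ) ≠ 0 := by exact_mod_cast hb.ne'
  have hc0 : (c : ℂ) ≠ 0 := by exact_mod_cast hc.ne'
  have f1 : ∀ x : ℝ, BFunChar (conjChar χ₁) (l + 1) x = (k : ℂ) ^ l * SB k (fun z => χ₁ z) (l + 1) x := by
    intro x
    unfold BFunChar SB conjChar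
    congr 1
    · push_cast; simp
    · simp
  have f2 : ∀ x : ℝ, BFunChar χ₂ (n + 1) x =
      (k : ℂ) ^ n * SB k (fun z => (starRingEnd ℂ) (χ₂ z)) (n + 1) x := by
    intro x
    unfold BFunChar SB
    congr 1
    push_cast; simp
  have f3 : ∀ x : ℝ, (x : ℂ) * BFunChar (conjChar χ₁) (l + 1) ((c : ℝ) * x) *
      BFunChar χ₂ (n + 1) ((b : ℝ) * x) = (k : ℂ) ^ (l + n) * ((x : ℂ) *
        (SB k (fun z => χ₁ z) (l + 1) (c * x) *
          SB k (fun z => (starRingEnd ℂ) (χ₂ z)) (n + 1) (b * x))) := by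
    intro x
    rw [f1, f2]; ring
  simp_rw [f3]
  rw [intervalIntegral.integral_const_mul, SB_weighted k _ _ _ _ hψ hφ (l + 1) (n + 1) c b,
    SB_integral k _ _ _ hψ (l + 1) (n + 1) b c (by omega) (by omega) hb hc hbc]
  · rw [Nat.cast_choose ℂ (show l + 1 ≤ l + 1 + (n + 1) by omega), hsub]
    set S := ∑ h ∈ Finset.Icc 1 (k - 1), ∑ j ∈ Finset.Icc 1 (k - 1),
          χ₁ (h : ZMod k) * (starRingEnd ℂ) (χ₂ (j : ZMod k)) *
            ((BFun (l + 1 + (n + 1)) (((c : ℝ) * j + (b : ℝ) * h) / k)) : ℂ)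
    have g1 : ((l + 1).factorial : ℂ) ≠ 0 := by exact_mod_cast Nat.factorial_ne_zero _
    have g2 : ((n + 1).factorial : ℂ) ≠ 0 := by exact_mod_cast Nat.factorial_ne_zero _
    have g3 : ((l + 1 + (n + 1)).factorial : ℂ) ≠ 0 := by exact_mod_cast Nat.factorial_ne_zero _
    generalize ((l + 1).factorial : ℂ) = A at *
    generalize ((n + 1).factorial : ℂ) = B at *
    generalize ((l + 1 + (n + 1)).factorial : ℂ) = D at *
    have g4 : (-(b : ℂ) / c) ^ l = (-1) ^ l * b ^ l / c ^ l := by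
      rw [← mul_pow, ← div_pow]; ring
    have g5 : ((-1 : ℂ)) ^ (l + 1 + 1) = (-1) ^ l := by ring
    have g6 : ((-1 : ℂ)) ^ l * (-1) ^ l = 1 := by rw [← mul_pow]; norm_num
    rw [g4, g5, div_pow]
    field_simp
    linear_combination (b : ℂ) ^ (l + 1) * (k : ℂ) ^ (l + n + 1) * (c : ℂ) ^ (l + n + 1) * S * χ₁ (-1) * g6
  · rw [hconj]
    linear_combination (-1 : ℂ) * hpar
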